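/- arXiv:1704.07078 — 6 statements merged into one kernel-verified Lean document; each statement's English description precedes it below -/
import Mathlib

section
/- Let G be a finite simple graph of order n that is neither complete nor empty. If G satisfies (k,1)-adjacency anonymity, then k ≤ ⌊(n−1)/2⌋. -/
open Finset

variable {V : Type*}

/-- The adjacency function: 0 if equal, 1 if adjacent, 2 otherwise. -/
def adjFn [DecidableEq V] (G : SimpleGraph V) [DecidableRel G.Adj] (u v : V) : ℕ :=
  if u = v then 0 else if G.Adj u v then 1 else 2

/-- The equivalence class of `x` outside `S` under equality of adjacency
representations with respect to `S`. -/
def adjClass [DecidableEq V] (G : SimpleGraph V) [DecidableRel G.Adj] (S : Set V) (x : V) :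
    Set V :=
  {y | y ∉ S ∧ ∀ s ∈ S, adjFn G s x = adjFn G s y}

/-- `S` is a `k`-adjacency antiresolving set of `G`: `S` is a proper nonempty subset of the
vertex set and `k` is the minimum cardinality of an equivalence class of the relation
"having equal adjacency representation with respect to `S`" on the complement of `S`. -/
def IsAdjAntiresolvingSet [DecidableEq V] (G : SimpleGraph V) [DecidableRel G.Adj]
    (S : Set V) (k : ℕ) : Prop :=
  S.Nonempty ∧ S ≠ Set.univ ∧ 0 < k ∧
    (∀ x ∉ S, k ≤ (adjClass G S x).ncard) ∧
    (∃ x ∉ S, (adjClass G S x).ncard = k)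

/-- `G` satisfies `(k,ℓ)`-adjacency anonymity: `k` is the smallest positive integer such that
the `k`-adjacency antidimension of `G` (minimum cardinality of a `k`-adjacency antiresolving
set) is at most `ℓ`. -/
def AdjAnonymous [DecidableEq V] (G : SimpleGraph V) [DecidableRel G.Adj] (k ℓ : ℕ) : Prop :=
  0 < k ∧ (∃ S : Set V, IsAdjAntiresolvingSet G S k ∧ S.ncard ≤ ℓ) ∧
    ∀ k' : ℕ, 0 < k' → (∃ S : Set V, IsAdjAntiresolvingSet G S k' ∧ S.ncard ≤ ℓ) → k ≤ k'

/-- if a finite simple graph `G` of order `n` that is neither complete nor empty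
satisfies `(k,1)`-adjacency anonymity, then `k ≤ ⌊(n-1)/2⌋`. -/
theorem stmt0 [Fintype V] [DecidableEq V] (G : SimpleGraph V) [DecidableRel G.Adj]
    (hnonempty : ∃ u v : V, G.Adj u v)
    (hnoncomplete : ∃ u v : V, u ≠ v ∧ ¬ G.Adj u v)
    (k : ℕ) (hG : AdjAnonymous G k 1) :
    k ≤ (Fintype.card V - 1) / 2 := by
  obtain ⟨v, a, b, ha, hbv, hb⟩ : ∃ v a b : V, G.Adj v a ∧ v ≠ b ∧ ¬ G.Adj v b := by
    by_contra hcon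
    push Not at hcon
    obtain ⟨u, w, huw⟩ := hnonempty
    obtain ⟨x, y, hxy, hn⟩ := hnoncomplete
    by_cases hx : u = x
    · subst hx
      exact hn (hcon u w y huw hxy)
    · exact hn (hcon x u y (hcon u w x huw hx).symm hxy)
  obtain ⟨_, _, hmin⟩ := hG
  have hcls : ∀ x, x ≠ v → adjClass G {v} x = {y | y ≠ v ∧ (G.Adj v x ↔ G.Adj v y)} := by
    intro x hx
    ext y
    simp only [adjClass, adjFn, Set.mem_setOf_eq, Set.mem_singleton_iff, forall_eq]
    grind
  have hA : ∀ x, G.Adj v x → adjClass G {v} x = adjClass G {v} a := by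
    intro x hx
    rw [hcls x hx.ne', hcls a ha.ne']
    simp [hx, ha]
  have hB : ∀ x, x ≠ v → ¬ G.Adj v x → adjClass G {v} x = adjClass G {v} b := by
    intro x hxv hx
    rw [hcls x hxv, hcls b hbv.symm]
    simp [hx, hb]
  have hmemA : a ∈ adjClass G {v} a := by
    rw [hcls a ha.ne']; exact ⟨ha.ne', Iff.rfl⟩
  have hmemB : b ∈ adjClass G {v} b := by
    rw [hcls b hbv.symm]; exact ⟨hbv.symm, Iff.rfl⟩
  have hApos : 0 < (adjClass G {v} a).ncard := (Set.ncard_pos (Set.toFinite _)).2 ⟨a, hmemA⟩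
  have hBpos : 0 < (adjClass G {v} b).ncard := (Set.ncard_pos (Set.toFinite _)).2 ⟨b, hmemB⟩
  have hsum : (adjClass G {v} a).ncard + (adjClass G {v} b).ncard = Fintype.card V - 1 := by
    rw [← Set.ncard_union_eq _ (Set.toFinite _) (Set.toFinite _)]
    · have : adjClass G {v} a ∪ adjClass G {v} b = ({v} : Set V)ᶜ := by
        rw [hcls a ha.ne', hcls b hbv.symm]
        ext y
        simp only [ha, hb, Set.mem_union, Set.mem_setOf_eq, Set.mem_compl_iff,
          Set.mem_singleton_iff]
        tauto
      rw [this, Set.ncard_compl, Set.ncard_singleton, Nat.card_eq_fintype_card]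
    · rw [hcls a ha.ne', hcls b hbv.symm, Set.disjoint_left]
      intro y hy hy'
      exact hb (hy'.2.2 (hy.2.1 ha))
  have hk : k ≤ min (adjClass G {v} a).ncard (adjClass G {v} b).ncard := by
    refine hmin _ (lt_min hApos hBpos) ⟨{v}, ⟨⟨v, rfl⟩, ?_, lt_min hApos hBpos, ?_, ?_⟩, by simp⟩
    · intro h
      have : a ∈ ({v} : Set V) := h ▸ Set.mem_univ a
      exact ha.ne' this
    · intro x hx
      by_cases hxa : G.Adj v x
      · rw [hA x hxa]; exact min_le_left _ _
      · rw [hB x hx hxa]; exact min_le_right _ _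
    · rcases le_total (adjClass G {v} a).ncard (adjClass G {v} b).ncard with h | h
      · exact ⟨a, ha.ne', (min_eq_left h).symm⟩
      · exact ⟨b, hbv.symm, (min_eq_right h).symm⟩
  omega
end

section
/- Let G be a finite simple graph of order n having no isolated vertices (vertices of degree 0) and no dominant vertices (vertices of degree n−1). Then G satisfies (k,1)-adjacency anonymity with k = min{δ(G), n − Δ(G) − 1}, where δ(G) and Δ(G) denote the minimum and maximum degree of G. -/
open Finset

variable {V : Type*}

theorem adjClass_ncard_adj [Fintype V] [DecidableEq V] (G : SimpleGraph V) [DecidableRel G.Adj]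
    {v x : V} (h : G.Adj v x) : (adjClass G {v} x).ncard = G.degree v := by
  have e : adjClass G {v} x = (G.neighborFinset v : Set V) := by
    ext y
    have := h.ne
    by_cases h1 : v = y
    · subst h1; simp [adjClass]
    · by_cases h2 : G.Adj v y <;> simp [adjClass, adjFn, h, this, h1, h2, Ne.symm h1]
  rw [e, Set.ncard_coe_finset, SimpleGraph.card_neighborFinset_eq_degree]

theorem adjClass_ncard_nonadj [Fintype V] [DecidableEq V] (G : SimpleGraph V)
    [DecidableRel G.Adj] {v x : V} (hx : v ≠ x) (h : ¬ G.Adj v x) :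
    (adjClass G {v} x).ncard = Fintype.card V - 1 - G.degree v := by
  have e : adjClass G {v} x = (Gᶜ.neighborFinset v : Set V) := by
    ext y
    by_cases h1 : v = y
    · subst h1; simp [adjClass]
    · by_cases h2 : G.Adj v y <;> simp [adjClass, adjFn, h, hx, h1, h2, Ne.symm h1]
  rw [e, Set.ncard_coe_finset, SimpleGraph.card_neighborFinset_eq_degree,
    SimpleGraph.degree_compl]

/-- a finite simple graph of order `n` with no isolated vertices and no dominant
vertices satisfies `(k,1)`-adjacency anonymity with `k = min {δ(G), n - Δ(G) - 1}`. -/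
theorem stmt1 [Fintype V] [DecidableEq V] [Nonempty V] (G : SimpleGraph V) [DecidableRel G.Adj]
    (hiso : ∀ v : V, G.degree v ≠ 0)
    (hdom : ∀ v : V, G.degree v ≠ Fintype.card V - 1) :
    AdjAnonymous G (min G.minDegree (Fintype.card V - G.maxDegree - 1)) 1 := by
  have hlt : ∀ v, G.degree v < Fintype.card V := fun v => G.degree_lt_card_verts v
  have hnb : ∀ v, ∃ x, G.Adj v x := fun v =>
    (G.degree_pos_iff_exists_adj v).1 (Nat.pos_of_ne_zero (hiso v))
  have hnn : ∀ v, ∃ x, v ≠ x ∧ ¬ G.Adj v x := by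
    intro v
    have h1 : 0 < Gᶜ.degree v := by
      rw [SimpleGraph.degree_compl]
      have := hlt v
      have := hdom v
      omega
    obtain ⟨x, hx⟩ := (Gᶜ.degree_pos_iff_exists_adj v).1 h1
    exact ⟨x, by simpa using hx⟩
  have hmin := G.minDegree_le_degree
  have hmax := G.degree_le_maxDegree
  obtain ⟨a, ha⟩ := G.exists_minimal_degree_vertex
  obtain ⟨b, hb⟩ := G.exists_maximal_degree_vertex
  have hpos : 0 < min G.minDegree (Fintype.card V - G.maxDegree - 1) := by
    have := hiso a
    have := hlt b
    have := hdom b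
    omega
  have hall : ∀ v x : V, x ∉ ({v} : Set V) →
      min G.minDegree (Fintype.card V - G.maxDegree - 1) ≤ (adjClass G {v} x).ncard := by
    intro v x hx
    have hvx : v ≠ x := fun h => hx h.symm
    have := hmin v
    have := hmax v
    by_cases h : G.Adj v x
    · rw [adjClass_ncard_adj G h]; omega
    · rw [adjClass_ncard_nonadj G hvx h]; omega
  have hkey : ∀ v x : V, x ∉ ({v} : Set V) → (adjClass G {v} x).ncard =
      min G.minDegree (Fintype.card V - G.maxDegree - 1) →
      ∃ S : Set V, IsAdjAntiresolvingSet G S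
        (min G.minDegree (Fintype.card V - G.maxDegree - 1)) ∧ S.ncard ≤ 1 := by
    intro v x hx h
    refine ⟨{v}, ⟨Set.singleton_nonempty v, ?_, hpos, hall v, x, hx, h⟩, by simp⟩
    intro hu
    exact hx (hu ▸ Set.mem_univ x)
  refine ⟨hpos, ?_, ?_⟩
  · rcases le_total G.minDegree (Fintype.card V - G.maxDegree - 1) with h | h
    · obtain ⟨x, hx⟩ := hnb a
      refine hkey a x (fun h => hx.ne h.symm) ?_
      rw [adjClass_ncard_adj G hx]; omega
    · obtain ⟨x, hne, hx⟩ := hnn b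
      refine hkey b x (fun h => hne h.symm) ?_
      rw [adjClass_ncard_nonadj G hne hx]; omega
  · rintro k' - ⟨S, ⟨hne, -, -, -, x, hx, hk⟩, hS⟩
    have h1 : S.ncard = 1 := le_antisymm hS ((Set.ncard_pos S.toFinite).2 hne)
    obtain ⟨v, rfl⟩ := Set.ncard_eq_one.1 h1
    rw [← hk]
    exact hall v x hx
end

section
/- Let G = (V,E) be a finite simple non-complete graph of order n whose set D_G of dominant vertices (vertices of degree n−1) is nonempty, and let S = V ∖ D_G. Then G satisfies (k,1)-adjacency anonymity with k = min{δ(G), |S| − Δ(⟨S⟩_G) − 1}, where δ(G) is the minimum degree of G, ⟨S⟩_G is the subgraph of G induced by S, and Δ(⟨S⟩_G) is its maximum degree. -/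
open Finset

variable {V : Type*}

theorem aux_class_adj [Fintype V] [DecidableEq V] (G : SimpleGraph V) [DecidableRel G.Adj]
    (v x : V) (h : G.Adj v x) : (adjClass G {v} x).ncard = G.degree v := by
  have : adjClass G {v} x = (G.neighborFinset v : Set V) := by
    ext y
    have := h.ne
    by_cases hy : v = y
    · subst hy; simp [adjClass]
    · by_cases ha : G.Adj v y <;> simp [adjClass, adjFn, h, this, hy, ha, Ne.symm hy, eq_comm]
  rw [this, Set.ncard_coe_finset, SimpleGraph.card_neighborFinset_eq_degree]

theorem aux_class_nonadj [Fintype V] [DecidableEq V] (G : SimpleGraph V) [DecidableRel G.Adj]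
    (v x : V) (h : ¬ G.Adj v x) (hne : v ≠ x) :
    (adjClass G {v} x).ncard = Fintype.card V - 1 - G.degree v := by
  have : adjClass G {v} x = (Gᶜ.neighborFinset v : Set V) := by
    ext y
    by_cases hy : v = y
    · subst hy; simp [adjClass]
    · by_cases ha : G.Adj v y <;> simp [adjClass, adjFn, h, hne, hy, ha, Ne.symm hy]
  rw [this, Set.ncard_coe_finset, SimpleGraph.card_neighborFinset_eq_degree,
    SimpleGraph.degree_compl]

theorem aux_dom [Fintype V] [DecidableEq V] (G : SimpleGraph V) [DecidableRel G.Adj]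
    (d x : V) (h : G.degree d = Fintype.card V - 1) (hne : d ≠ x) : G.Adj d x := by
  by_contra hn
  have h1 : Gᶜ.degree d = 0 := by rw [SimpleGraph.degree_compl]; omega
  rw [← SimpleGraph.card_neighborFinset_eq_degree, Finset.card_eq_zero] at h1
  have : x ∈ Gᶜ.neighborFinset d := by simp [hn, hne]
  simp [h1] at this

theorem aux_nondom [Fintype V] [DecidableEq V] (G : SimpleGraph V) [DecidableRel G.Adj]
    (d : V) (h : G.degree d ≠ Fintype.card V - 1) : ∃ x, d ≠ x ∧ ¬ G.Adj d x := by
  by_contra! hn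
  have h0 := G.degree_lt_card_verts d
  have h1 : Gᶜ.degree d = 0 := by
    rw [← SimpleGraph.card_neighborFinset_eq_degree, Finset.card_eq_zero]
    ext x
    simpa using fun hx => hn x hx
  rw [SimpleGraph.degree_compl] at h1
  omega

theorem aux_deg [Fintype V] [DecidableEq V] (G : SimpleGraph V) [DecidableRel G.Adj]
    (S : Finset V) (hS : S = Finset.univ.filter fun v => G.degree v ≠ Fintype.card V - 1)
    (v : V) (hv : v ∈ S) :
    G.degree v + S.card = Fintype.card V + (S.filter fun w => G.Adj v w).card := by
  have h : G.neighborFinset v = Sᶜ ∪ S.filter fun w => G.Adj v w := by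
    ext w
    simp only [SimpleGraph.mem_neighborFinset, mem_union, mem_compl, mem_filter]
    by_cases hw : w ∈ S
    · simp [hw]
    · simp only [hw, not_false_eq_true, true_or, iff_true]
      refine (aux_dom G w v ?_ ?_).symm
      · by_contra hc; exact hw (by simp [hS, hc])
      · rintro rfl; exact hw hv
  have hd : Disjoint Sᶜ (S.filter fun w => G.Adj v w) := by
    rw [Finset.disjoint_left]
    intro a ha hb
    simp at ha hb
    exact ha hb.1
  have h2 := Finset.card_union_of_disjoint hd
  rw [← h, SimpleGraph.card_neighborFinset_eq_degree] at h2
  have := Finset.card_add_card_compl S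
  omega

/-- a finite simple non-complete graph `G` of order `n` with a nonempty set of
dominant vertices satisfies `(k,1)`-adjacency anonymity with
`k = min {δ(G), |S| - Δ(⟨S⟩_G) - 1}`, where `S` is the set of non-dominant vertices. -/
theorem stmt2 [Fintype V] [DecidableEq V] [Nonempty V] (G : SimpleGraph V) [DecidableRel G.Adj]
    (hnoncomplete : ∃ u v : V, u ≠ v ∧ ¬ G.Adj u v)
    (hdom : ∃ v : V, G.degree v = Fintype.card V - 1)
    (S : Finset V) (hS : S = Finset.univ.filter fun v => G.degree v ≠ Fintype.card V - 1) :
    AdjAnonymous G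
      (min G.minDegree
        (S.card - S.sup (fun v => (S.filter fun w => G.Adj v w).card) - 1)) 1 := by
  classical
  have hmem : ∀ v, v ∈ S ↔ G.degree v ≠ Fintype.card V - 1 := by intro v; simp [hS]
  obtain ⟨d, hd⟩ := hdom
  obtain ⟨u, u', huu, hu⟩ := hnoncomplete
  have hnon : ∀ v x, v ≠ x → ¬ G.Adj v x → v ∈ S := by
    intro v x h1 h2
    rw [hmem]
    exact fun h => h2 (aux_dom G v x h h1)
  have huS : u ∈ S := hnon u u' huu hu
  have hdegS := aux_deg G S hS
  set f : V → ℕ := fun v => (S.filter fun w => G.Adj v w).card with hf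
  have hdeg : ∀ v ∈ S, G.degree v + S.card = Fintype.card V + f v := hdegS
  have hsup : ∀ v ∈ S, f v ≤ S.sup f := fun v hv => Finset.le_sup hv
  obtain ⟨M, hMS, hM⟩ := Finset.exists_mem_eq_sup S ⟨u, huS⟩ f
  obtain ⟨m, hm⟩ := G.exists_minimal_degree_vertex
  have hmin : ∀ v, G.minDegree ≤ G.degree v := G.minDegree_le_degree
  have hlt := G.degree_lt_card_verts
  have hmS : m ∈ S := by
    rw [hmem]
    have h1 := hmin u
    have h2 := (hmem u).1 huS
    have h3 := hlt u
    omega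
  have hdS : ∀ v ∈ S, G.Adj v d := by
    intro v hv
    refine (aux_dom G d v hd ?_).symm
    rintro rfl
    exact (hmem _).1 hv hd
  have hpos : ∀ v ∈ S, 0 < G.degree v := fun v hv =>
    (G.degree_pos_iff_exists_adj v).2 ⟨d, hdS v hv⟩
  have key : ∀ v ∈ S, ∀ k, 0 < k → k ≤ G.degree v → k ≤ Fintype.card V - 1 - G.degree v →
      (G.degree v = k ∨ Fintype.card V - 1 - G.degree v = k) →
      ∃ T : Set V, IsAdjAntiresolvingSet G T k ∧ T.ncard ≤ 1 := by
    intro v hv k hk h1 h2 h3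
    refine ⟨{v}, ⟨⟨v, rfl⟩, ?_, hk, ?_, ?_⟩, by simp⟩
    · intro h
      have : d ∈ ({v} : Set V) := h ▸ Set.mem_univ d
      exact (hdS v hv).ne (by simpa using this.symm)
    · intro x hx
      by_cases ha : G.Adj v x
      · rwa [aux_class_adj G v x ha]
      · rwa [aux_class_nonadj G v x ha (fun h => hx (by simp [h]))]
    · rcases h3 with h3 | h3
      · exact ⟨d, by simpa using (hdS v hv).ne.symm, by rw [aux_class_adj G v d (hdS v hv), h3]⟩
      · obtain ⟨x, hx, hxa⟩ := aux_nondom G v ((hmem v).1 hv)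
        exact ⟨x, by simpa using hx.symm, by rw [aux_class_nonadj G v x hxa hx, h3]⟩
  have em := hdeg m hmS
  have eM := hdeg M hMS
  have sm := hsup m hmS
  have pm := hpos m hmS
  have nM := (hmem M).1 hMS
  have lM := hlt M
  have lm := hlt m
  have mM := hmin M
  have hk : 0 < min G.minDegree (S.card - S.sup f - 1) := by
    rw [lt_min_iff]; omega
  refine ⟨hk, ?_, ?_⟩
  · rcases le_total G.minDegree (S.card - S.sup f - 1) with h | h
    · rw [min_eq_left h] at hk ⊢
      exact key m hmS _ hk (by omega) (by omega) (by omega)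
    · rw [min_eq_right h] at hk ⊢
      exact key M hMS _ hk (by omega) (by omega) (by omega)
  · rintro k' hk' ⟨T, ⟨hT, -, -, -, x, hx, hxk⟩, hT1⟩
    obtain ⟨v, rfl⟩ : ∃ v, T = {v} := by
      rw [← Set.ncard_eq_one]
      have := (Set.ncard_pos (Set.toFinite T)).2 hT
      omega
    by_cases ha : G.Adj v x
    · rw [aux_class_adj G v x ha] at hxk
      exact (min_le_left _ _).trans (hxk ▸ hmin v)
    · have hne : v ≠ x := fun h => hx (by simp [h])
      rw [aux_class_nonadj G v x ha hne] at hxk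
      have hv := hnon v x hne ha
      have h1 := hdeg v hv
      have h2 := hsup v hv
      refine (min_le_right _ _).trans ?_
      omega
end

section
/- Let G = (V,E) be a finite simple non-empty graph of order n whose set I_G of isolated vertices (vertices of degree 0) is nonempty, and let S = V ∖ I_G. Then G satisfies (k,1)-adjacency anonymity with k = min{δ(⟨S⟩_G), n − Δ(G) − 1}, where ⟨S⟩_G is the subgraph of G induced by S, δ(⟨S⟩_G) is its minimum degree, and Δ(G) is the maximum degree of G. -/
open Finset

variable {V : Type*}

lemma adjClass_adj [Fintype V] [DecidableEq V] (G : SimpleGraph V) [DecidableRel G.Adj]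
    (s x : V) (h : G.Adj s x) : (adjClass G {s} x).ncard = G.degree s := by
  have : adjClass G {s} x = (G.neighborFinset s : Set V) := by
    ext y
    have hsx : s ≠ x := h.ne
    simp only [adjClass, adjFn, Set.mem_singleton_iff, Set.mem_setOf_eq, forall_eq, hsx, h,
      if_true, if_false, Finset.mem_coe, SimpleGraph.mem_neighborFinset]
    by_cases hy : s = y
    · subst hy; simp
    · by_cases ha : G.Adj s y <;> simp [hy, ha, Ne.symm hy]
  rw [this, Set.ncard_coe_finset, SimpleGraph.card_neighborFinset_eq_degree]

lemma adjClass_not_adj [Fintype V] [DecidableEq V] (G : SimpleGraph V) [DecidableRel G.Adj]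
    (s x : V) (hsx : s ≠ x) (h : ¬ G.Adj s x) :
    (adjClass G {s} x).ncard + G.degree s + 1 = Fintype.card V := by
  have : adjClass G {s} x = ((insert s (G.neighborFinset s))ᶜ : Finset V) := by
    ext y
    simp only [adjClass, adjFn, Set.mem_singleton_iff, Set.mem_setOf_eq, forall_eq, hsx, h,
      if_false, Finset.mem_coe, Finset.mem_compl, Finset.mem_insert,
      SimpleGraph.mem_neighborFinset, not_or]
    by_cases hy : s = y
    · subst hy; simp
    · by_cases ha : G.Adj s y <;> simp [hy, ha]
  rw [this, Set.ncard_coe_finset]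
  have h2 := Finset.card_add_card_compl (insert s (G.neighborFinset s))
  rw [Finset.card_insert_of_notMem (by simp), SimpleGraph.card_neighborFinset_eq_degree] at h2
  omega

/-- a finite simple non-empty graph `G` of order `n` with a nonempty set of
isolated vertices satisfies `(k,1)`-adjacency anonymity with
`k = min {δ(⟨S⟩_G), n - Δ(G) - 1}`, where `S` is the set of non-isolated vertices. -/
theorem stmt3 [Fintype V] [DecidableEq V] [Nonempty V] (G : SimpleGraph V) [DecidableRel G.Adj]
    (hnonempty : ∃ u v : V, G.Adj u v)
    (hiso : ∃ v : V, G.degree v = 0)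
    (S : Finset V) (hS : S = Finset.univ.filter fun v => G.degree v ≠ 0) :
    AdjAnonymous G
      (min (sInf ((fun v => (S.filter fun w => G.Adj v w).card) '' (S : Set V)))
        (Fintype.card V - G.maxDegree - 1)) 1 := by
  have hmem : ∀ v, v ∈ S ↔ G.degree v ≠ 0 := by intro v; simp [hS]
  have hdeg : ∀ v, (S.filter fun w => G.Adj v w).card = G.degree v := by
    intro v
    rw [← SimpleGraph.card_neighborFinset_eq_degree]
    congr 1
    ext w
    simp only [Finset.mem_filter, SimpleGraph.mem_neighborFinset, hmem, and_iff_right_iff_imp]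
    intro h
    exact ((G.degree_pos_iff_exists_adj w).2 ⟨v, h.symm⟩).ne'
  simp only [hdeg]
  obtain ⟨u, v, huv⟩ := hnonempty
  obtain ⟨i, hi⟩ := hiso
  have hiso' : ∀ w, ¬ G.Adj w i := fun w h =>
    ((G.degree_pos_iff_exists_adj i).2 ⟨w, h.symm⟩).ne' hi
  have hu : G.degree u ≠ 0 := ((G.degree_pos_iff_exists_adj u).2 ⟨v, huv⟩).ne'
  have hne : ((fun v => G.degree v) '' (S : Set V)).Nonempty :=
    ⟨_, u, Finset.mem_coe.2 ((hmem u).2 hu), rfl⟩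
  obtain ⟨a, haS, ha⟩ := Nat.sInf_mem hne
  have hle : ∀ w, G.degree w ≠ 0 → sInf ((fun v => G.degree v) '' (S : Set V)) ≤ G.degree w :=
    fun w hw => Nat.sInf_le ⟨w, Finset.mem_coe.2 ((hmem w).2 hw), rfl⟩
  have ha0 : G.degree a ≠ 0 := (hmem a).1 (Finset.mem_coe.1 haS)
  generalize sInf ((fun v => G.degree v) '' (S : Set V)) = d at ha hle ⊢
  simp only at ha
  obtain ⟨b, hb⟩ := G.exists_maximal_degree_vertex
  have hmax : ∀ w, G.degree w ≤ G.maxDegree := G.degree_le_maxDegree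
  have hb0 : G.degree b ≠ 0 := by have := hmax u; omega
  have hib : b ≠ i := by rintro rfl; exact hb0 hi
  have hia : a ≠ i := by rintro rfl; exact ha0 hi
  have hbi := adjClass_not_adj G b i hib (hiso' b)
  have hpos : 0 < (adjClass G {b} i).ncard := by
    rw [Set.ncard_pos]
    exact ⟨i, fun h => hib (Set.mem_singleton_iff.1 h).symm, fun _ _ => rfl⟩
  -- every class is large
  have hbig : ∀ s x, x ∉ ({s} : Set V) →
      min d (Fintype.card V - G.maxDegree - 1) ≤ (adjClass G {s} x).ncard := by
    intro s x hx
    have hsx : s ≠ x := fun e => hx (Set.mem_singleton_iff.2 e.symm)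
    by_cases h : G.Adj s x
    · rw [adjClass_adj G s x h]
      exact (min_le_left _ _).trans
        (hle s ((G.degree_pos_iff_exists_adj s).2 ⟨x, h⟩).ne')
    · have h1 := adjClass_not_adj G s x hsx h
      have h2 := hmax s
      omega
  refine ⟨by omega, ?_, ?_⟩
  · rcases le_total d (Fintype.card V - G.maxDegree - 1) with h | h
    · obtain ⟨c, hc⟩ := (G.degree_pos_iff_exists_adj a).1 (Nat.pos_of_ne_zero ha0)
      refine ⟨{a}, ⟨⟨a, rfl⟩, ?_, by omega, hbig a, c, fun e => hc.ne
        (Set.mem_singleton_iff.1 e).symm, ?_⟩, by simp⟩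
      · intro e
        have : i ∈ ({a} : Set V) := e ▸ Set.mem_univ i
        exact hia (Set.mem_singleton_iff.1 this).symm
      · rw [adjClass_adj G a c hc]; omega
    · refine ⟨{b}, ⟨⟨b, rfl⟩, ?_, by omega, hbig b, i, fun e => hib
        (Set.mem_singleton_iff.1 e).symm, ?_⟩, by simp⟩
      · intro e
        have : i ∈ ({b} : Set V) := e ▸ Set.mem_univ i
        exact hib (Set.mem_singleton_iff.1 this).symm
      · omega
  · rintro k' - ⟨T, ⟨hT, -, -, -, x, hx, hk⟩, hc⟩
    have h1 : T.ncard = 1 := le_antisymm hc ((Set.ncard_pos).2 hT)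
    obtain ⟨s, rfl⟩ := Set.ncard_eq_one.1 h1
    rw [← hk]
    exact hbig s x hx
end

section
/- Let G = (V,E) be a finite simple graph of order n and let k be a positive integer with k ≤ ⌊(n−1)/2⌋. Then there exists a graph G' = (V,E') on the same vertex set with E ⊆ E' such that every vertex u with 1 ≤ deg_G(u) < k satisfies deg_{G'}(u) ≥ k, and the number of added edges satisfies |E' ∖ E| ≤ Σ_{u ∈ V, 1 ≤ deg_G(u) < k} (k − deg_G(u)). -/
open Finset
open scoped Classical

/-- upper bound on the number of edges that need to be added. For every finite
simple graph `G` of order `n` and positive `k ≤ ⌊(n-1)/2⌋`, there is a supergraph `G'` on the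
same vertex set in which every vertex `u` with `1 ≤ deg_G u < k` has degree at least `k`,
obtained by adding at most `Σ_{u, 1 ≤ deg_G u < k} (k - deg_G u)` edges. -/
theorem stmt5 {V : Type*} [Fintype V] [DecidableEq V] (G : SimpleGraph V) [DecidableRel G.Adj]
    (k : ℕ) (hk : 0 < k) (hkn : k ≤ (Fintype.card V - 1) / 2) :
    ∃ G' : SimpleGraph V, G ≤ G' ∧
      (∀ u : V, 1 ≤ G.degree u → G.degree u < k → k ≤ G'.degree u) ∧
      (G'.edgeFinset \ G.edgeFinset).card ≤
        ∑ u ∈ Finset.univ.filter (fun u => 1 ≤ G.degree u ∧ G.degree u < k),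
          (k - G.degree u) := by
  have hA : ∀ u : V, ∃ A : Finset V, A ⊆ univ \ (insert u (G.neighborFinset u)) ∧
      A.card = k - G.degree u := by
    intro u
    apply Finset.exists_subset_card_eq
    rw [Finset.card_sdiff_of_subset (Finset.subset_univ _), Finset.card_univ,
      Finset.card_insert_of_notMem (by simp), SimpleGraph.card_neighborFinset_eq_degree]
    omega
  choose A hAs hAc using hA
  have hA' : ∀ u v, v ∈ A u → v ≠ u ∧ ¬ G.Adj u v := by
    intro u v hv
    have := hAs u hv
    simpa using this
  refine ⟨G ⊔ SimpleGraph.fromRel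
    (fun u v => (1 ≤ G.degree u ∧ G.degree u < k) ∧ v ∈ A u), le_sup_left, ?_, ?_⟩
  · intro u h1 h2
    have hsub : G.neighborFinset u ∪ A u ⊆ (G ⊔ SimpleGraph.fromRel
        (fun u v => (1 ≤ G.degree u ∧ G.degree u < k) ∧ v ∈ A u)).neighborFinset u := by
      intro v hv
      rw [SimpleGraph.mem_neighborFinset, SimpleGraph.sup_adj, SimpleGraph.fromRel_adj]
      rcases Finset.mem_union.1 hv with hv | hv
      · left
        simpa using hv
      · right
        exact ⟨(hA' u v hv).1.symm, Or.inl ⟨⟨h1, h2⟩, hv⟩⟩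
    have hd : Disjoint (G.neighborFinset u) (A u) := by
      rw [Finset.disjoint_left]
      intro v hv hv'
      exact (hA' u v hv').2 (by simpa using hv)
    have hc := Finset.card_le_card hsub
    rw [Finset.card_union_of_disjoint hd, hAc, SimpleGraph.card_neighborFinset_eq_degree,
      SimpleGraph.card_neighborFinset_eq_degree] at hc
    have hc' : k ≤ _ := le_trans (b := G.degree u + (k - G.degree u)) (by omega) hc
    convert hc'
  · have hsub : ((G ⊔ SimpleGraph.fromRel
        (fun u v => (1 ≤ G.degree u ∧ G.degree u < k) ∧ v ∈ A u)).edgeFinset \ G.edgeFinset) ⊆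
        (Finset.univ.filter (fun u => 1 ≤ G.degree u ∧ G.degree u < k)).biUnion
          (fun u => (A u).image (fun v => s(u, v))) := by
      intro e he
      induction e using Sym2.ind with
      | _ x y =>
        rw [Finset.mem_sdiff, SimpleGraph.mem_edgeFinset, SimpleGraph.mem_edgeFinset,
          SimpleGraph.mem_edgeSet, SimpleGraph.mem_edgeSet, SimpleGraph.sup_adj,
          SimpleGraph.fromRel_adj] at he
        obtain ⟨h | ⟨-, h | h⟩, hn⟩ := he
        · exact absurd h hn
        · exact Finset.mem_biUnion.2 ⟨x, Finset.mem_filter.2 ⟨Finset.mem_univ _, h.1⟩,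
            Finset.mem_image.2 ⟨y, h.2, rfl⟩⟩
        · exact Finset.mem_biUnion.2 ⟨y, Finset.mem_filter.2 ⟨Finset.mem_univ _, h.1⟩,
            Finset.mem_image.2 ⟨x, h.2, Sym2.eq_swap⟩⟩
    have h1 := Finset.card_le_card hsub
    have h2 := h1.trans Finset.card_biUnion_le
    have h3 := h2.trans (Finset.sum_le_sum
      (fun u _ => (Finset.card_image_le (s := A u) (f := fun v => s(u, v))).trans (hAc u).le))
    convert h3 using 1
    all_goals congr!
end

section
/- Let G = (V,E) be a finite simple graph of order n and let k be a positive integer with k ≤ ⌊(n−1)/2⌋. Then there exists a graph G'' = (V,E'') on the same vertex set with E'' ⊆ E such that every vertex u with n−k−1 < deg_G(u) ≤ n−2 satisfies deg_{G''}(u) ≤ n−k−1, and the number of removed edges satisfies |E ∖ E''| ≤ Σ_{u ∈ V, n−k−1 < deg_G(u) ≤ n−2} (deg_G(u) − (n−k−1)). -/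
open Finset
open scoped Classical

/-- upper bound on the number of edges that need to be removed. For every finite
simple graph `G` of order `n` and positive `k ≤ ⌊(n-1)/2⌋`, there is a subgraph `G''` on the
same vertex set in which every vertex `u` with `n-k-1 < deg_G u ≤ n-2` has degree at most
`n-k-1`, obtained by removing at most `Σ_{u, n-k-1 < deg_G u ≤ n-2} (deg_G u - (n-k-1))`
edges. -/
theorem stmt7 {V : Type*} [Fintype V] [DecidableEq V] (G : SimpleGraph V) [DecidableRel G.Adj]
    (k : ℕ) (hk : 0 < k) (hkn : k ≤ (Fintype.card V - 1) / 2) :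
    ∃ G'' : SimpleGraph V, G'' ≤ G ∧
      (∀ u : V, Fintype.card V - k - 1 < G.degree u → G.degree u ≤ Fintype.card V - 2 →
        G''.degree u ≤ Fintype.card V - k - 1) ∧
      (G.edgeFinset \ G''.edgeFinset).card ≤
        ∑ u ∈ Finset.univ.filter
          (fun u => Fintype.card V - k - 1 < G.degree u ∧ G.degree u ≤ Fintype.card V - 2),
          (G.degree u - (Fintype.card V - k - 1)) := by
  have hR : ∀ u : V, ∃ R : Finset V, R ⊆ G.neighborFinset u ∧
      R.card = G.degree u - (Fintype.card V - k - 1) := fun u =>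
    Finset.exists_subset_card_eq (by rw [SimpleGraph.card_neighborFinset_eq_degree]; omega)
  choose R hRs hRc using hR
  set S := Finset.univ.filter
    (fun u => Fintype.card V - k - 1 < G.degree u ∧ G.degree u ≤ Fintype.card V - 2) with hS
  set F : Finset (Sym2 V) := S.biUnion (fun u => (R u).image (fun v => s(u, v))) with hF
  obtain ⟨H, hH⟩ : ∃ H : SimpleGraph V, H = G.deleteEdges (F : Set (Sym2 V)) := ⟨_, rfl⟩
  have hadj : ∀ a b, H.Adj a b ↔ G.Adj a b ∧ s(a, b) ∉ (F : Set (Sym2 V)) := by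
    intro a b
    rw [hH, SimpleGraph.deleteEdges_adj]
  have hedge : H.edgeSet = G.edgeSet \ (F : Set (Sym2 V)) := by
    rw [hH, SimpleGraph.edgeSet_deleteEdges]
  refine ⟨H, hH ▸ SimpleGraph.deleteEdges_le _, ?_, ?_⟩
  · intro u h1 h2
    have hsub : H.neighborFinset u ⊆
        G.neighborFinset u \ R u := by
      intro v hv
      rw [SimpleGraph.mem_neighborFinset, hadj] at hv
      rw [Finset.mem_sdiff, SimpleGraph.mem_neighborFinset]
      refine ⟨hv.1, fun hvR => hv.2 ?_⟩
      rw [Finset.mem_coe, hF, Finset.mem_biUnion]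
      exact ⟨u, by rw [hS, Finset.mem_filter]; exact ⟨Finset.mem_univ _, h1, h2⟩,
        Finset.mem_image_of_mem _ hvR⟩
    have hc := Finset.card_le_card hsub
    rw [Finset.card_sdiff_of_subset (hRs u), hRc, SimpleGraph.card_neighborFinset_eq_degree,
      SimpleGraph.card_neighborFinset_eq_degree] at hc
    omega
  · have hsub : G.edgeFinset \ H.edgeFinset ⊆ F := by
      intro e he
      rw [Finset.mem_sdiff, SimpleGraph.mem_edgeFinset, SimpleGraph.mem_edgeFinset,
        hedge] at he
      by_contra h
      exact he.2 ⟨he.1, h⟩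
    refine (Finset.card_le_card hsub).trans (Finset.card_biUnion_le.trans ?_)
    exact Finset.sum_le_sum fun u _ => Finset.card_image_le.trans (hRc u).le
end
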